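/- arXiv:2512.12446 — 2 statements merged into one kernel-verified Lean document; each statement's English description precedes it below -/
import Mathlib

section
/- Let n ≥ 3 be a finite natural number and let 𝔄 = ⟨A, +, −, c_i, s_ij, p_ij⟩_{i,j<n} be a csp-algebra. Then 𝔄 is isomorphic to a subalgebra of the full csp-set algebra on some base set V if and only if 𝔄 satisfies the FPA_n axioms and its reduct ⟨A, +, −, c_i, s_ij⟩_{i,j<n} is isomorphic to a subalgebra of the full cs-set algebra on some base set U. -/
/-- Cylindrification: `C_i(R) = {s : s(i/u) ∈ R for some u}`. -/
def cyl {n : ℕ} {U : Type} (i : Fin n) (R : Set (Fin n → U)) : Set (Fin n → U) :=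
  {s | ∃ u : U, Function.update s i u ∈ R}

/-- Substitution: `S_ij(R) = {s : s(i/s(j)) ∈ R}`. -/
def subst {n : ℕ} {U : Type} (i j : Fin n) (R : Set (Fin n → U)) : Set (Fin n → U) :=
  {s | Function.update s i (s j) ∈ R}

/-- Transposition: `P_ij(R) = {s : s(i/s(j))(j/s(i)) ∈ R}`. -/
def transp {n : ℕ} {U : Type} (i j : Fin n) (R : Set (Fin n → U)) : Set (Fin n → U) :=
  {s | Function.update (Function.update s i (s j)) j (s i) ∈ R}

/-- `⟨A, +, −, c_i, s_ij, p_ij⟩` is isomorphic to a subalgebra of the full csp-set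
algebra on some base set. -/
def RepCspSet {n : ℕ} {A : Type} [BooleanAlgebra A]
    (c : Fin n → A → A) (s : Fin n → Fin n → A → A) (p : Fin n → Fin n → A → A) : Prop :=
  ∃ (V : Type) (f : A → Set (Fin n → V)),
    Function.Injective f ∧
    (∀ x y : A, f (x ⊔ y) = f x ⊔ f y) ∧
    (∀ x : A, f xᶜ = (f x)ᶜ) ∧
    (∀ (i : Fin n) (x : A), f (c i x) = cyl i (f x)) ∧
    (∀ (i j : Fin n) (x : A), f (s i j x) = subst i j (f x)) ∧
    (∀ (i j : Fin n) (x : A), f (p i j x) = transp i j (f x))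

/-- `⟨A, +, −, c_i, s_ij⟩` is isomorphic to a subalgebra of the full cs-set algebra
on some base set. -/
def RepCsSet {n : ℕ} {A : Type} [BooleanAlgebra A]
    (c : Fin n → A → A) (s : Fin n → Fin n → A → A) : Prop :=
  ∃ (U : Type) (f : A → Set (Fin n → U)),
    Function.Injective f ∧
    (∀ x y : A, f (x ⊔ y) = f x ⊔ f y) ∧
    (∀ x : A, f xᶜ = (f x)ᶜ) ∧
    (∀ (i : Fin n) (x : A), f (c i x) = cyl i (f x)) ∧
    (∀ (i j : Fin n) (x : A), f (s i j x) = subst i j (f x))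

/-! In a representation over `U`, each tuple has a type: the set of elements of the algebra whose
image contains it. A representation of the csp-algebra over a larger base `V` is found by choosing
new types for the tuples over `V`.

On an element fixed by some `c m`, the operation `p i j` is a composition of substitutions, so it
already acts there as the transposition of coordinates. This settles the non-injective tuples: if
`t k = t l`, the type of `t` does not separate `x` from `s k l x`, nor does it after a change at a
third coordinate. The type of an injective tuple is not restricted in this way, and `p i j` may act
on it wrongly. But the axioms include relations which present the symmetric group, so the `p i j`
generate an action of all permutations. We are therefore free to prescribe the type of one tuple out
of each orbit of injective tuples and to transport it to the rest of the orbit by this action.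

The remaining difficulty is that every `c i` must keep its witnesses. For this, `V` contains many
copies of each element of `U`, carrying codes that choose the prescribed tuple of an orbit: any
tuple can be completed by a copy of any element so that the resulting tuple is a prescribed one.
-/

open Equiv Function

section TranspositionFamily

variable {ι G G' : Type*} [Group G] [Group G']

/-- A family of group elements indexed by pairs which satisfies the relations of the
transpositions `swap i j`. On a finite index set these relations present the symmetric group, see
`IsTranspositionFamily.exists_permHom`. -/
structure IsTranspositionFamily (q : ι → ι → G) : Prop where
  diag : ∀ i, q i i = 1
  symm : ∀ i j, q i j = q j i
  mul_self : ∀ i j, q i j * q i j = 1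
  semiconjBy_of_ne : ∀ i j k, i ≠ j → i ≠ k → j ≠ k → SemiconjBy (q i j) (q i k) (q j k)

/-- The subgroup generated by the members of a family whose two indices lie in `S`. -/
def pairClosure (q : ι → ι → G) (S : Set ι) : Subgroup G :=
  Subgroup.closure (Set.image2 q S S)

theorem mem_pairClosure (q : ι → ι → G) {S : Set ι} {i j : ι} (hi : i ∈ S) (hj : j ∈ S) :
    q i j ∈ pairClosure q S :=
  Subgroup.subset_closure (Set.mem_image2_of_mem hi hj)

theorem isTranspositionFamily_swap [DecidableEq ι] :
    IsTranspositionFamily (swap : ι → ι → Perm ι) where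
  diag := swap_self
  symm := swap_comm
  mul_self := swap_mul_self
  semiconjBy_of_ne i j k _ hik hjk := by
    have := mul_swap_eq_swap_mul (swap i j) i k
    rwa [swap_apply_left, swap_apply_of_ne_of_ne hik.symm hjk.symm] at this

namespace IsTranspositionFamily

variable {q : ι → ι → G} (hq : IsTranspositionFamily q)
include hq

theorem inv_eq (i j : ι) : (q i j)⁻¹ = q i j :=
  inv_eq_of_mul_eq_one_left (hq.mul_self i j)

theorem mul_cancel_left (i j : ι) (g : G) : q i j * (q i j * g) = g := by
  rw [← mul_assoc, hq.mul_self, one_mul]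

theorem mul_mul_of_ne {i j k : ι} (hij : i ≠ j) (hik : i ≠ k) (hjk : j ≠ k) :
    q i j * q i k * q i j = q j k := by
  rw [hq.semiconjBy_of_ne i j k hij hik hjk, mul_assoc, hq.mul_self, mul_one]

theorem eq_mul_mul_of_ne {i j m : ι} (hij : i ≠ j) (him : i ≠ m) (hjm : j ≠ m) :
    q i j = q j m * q i j * q i m := by
  rw [← (hq.semiconjBy_of_ne i j m hij him hjm).eq, mul_assoc, hq.mul_self, mul_one]

theorem commute_of_disjoint {i j k l : ι} (hij : i ≠ j) (hkl : k ≠ l) (hik : i ≠ k) (hil : i ≠ l)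
    (hjk : j ≠ k) (hjl : j ≠ l) : Commute (q i j) (q k l) := by
  have hk := hq.semiconjBy_of_ne i j k hij hik hjk
  have hl := hq.semiconjBy_of_ne i j l hij hil hjl
  have h := (hk.mul_right hl).mul_right hk
  rwa [hq.mul_mul_of_ne hik hil hkl, hq.mul_mul_of_ne hjk hjl hkl] at h

theorem semiconjBy_left [DecidableEq ι] (i j l : ι) :
    SemiconjBy (q i j) (q i l) (q j (swap i j l)) := by
  rcases eq_or_ne i j with rfl | hij
  · simp [hq.diag]
  rcases eq_or_ne l i with rfl | hli
  · simp [hq.diag]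
  rcases eq_or_ne l j with rfl | hlj
  · rw [swap_apply_right, hq.symm l i]
    exact Commute.refl _
  · rw [swap_apply_of_ne_of_ne hli hlj]
    exact hq.semiconjBy_of_ne i j l hij hli.symm hlj.symm

theorem semiconjBy_swap [DecidableEq ι] (i j k l : ι) :
    SemiconjBy (q i j) (q k l) (q (swap i j k) (swap i j l)) := by
  by_cases hk : k = i ∨ k = j
  · rcases hk with rfl | rfl
    · simpa using hq.semiconjBy_left k j l
    · simpa [swap_comm, hq.symm] using hq.semiconjBy_left k i l
  by_cases hl : l = i ∨ l = j
  · rw [hq.symm k, hq.symm (swap i j k)]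
    rcases hl with rfl | rfl
    · simpa using hq.semiconjBy_left l j k
    · simpa [swap_comm, hq.symm] using hq.semiconjBy_left l i k
  push Not at hk hl
  rw [swap_apply_of_ne_of_ne hk.1 hk.2, swap_apply_of_ne_of_ne hl.1 hl.2]
  rcases eq_or_ne i j with rfl | hij
  · simp [hq.diag]
  rcases eq_or_ne k l with rfl | hkl
  · simp [hq.diag]
  exact hq.commute_of_disjoint hij hkl hk.1.symm hl.1.symm hk.2.symm hl.2.symm

theorem prodMk {q' : ι → ι → G'} (hq' : IsTranspositionFamily q') :
    IsTranspositionFamily fun i j => (q i j, q' i j) where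
  diag i := Prod.ext (hq.diag i) (hq'.diag i)
  symm i j := Prod.ext (hq.symm i j) (hq'.symm i j)
  mul_self i j := Prod.ext (hq.mul_self i j) (hq'.mul_self i j)
  semiconjBy_of_ne i j k hij hik hjk :=
    Prod.ext (hq.semiconjBy_of_ne i j k hij hik hjk) (hq'.semiconjBy_of_ne i j k hij hik hjk)

-- The elements `q a b` represent the cosets of `pairClosure q S` in `pairClosure q (insert a S)`,
-- so these are the Schreier generators of the former subgroup.
theorem schreierGenerator_mem_pairClosure [DecidableEq ι] {S : Set ι} {a i j b : ι}
    (hi : i ∈ insert a S) (hj : j ∈ insert a S) (hb : b ∈ insert a S) :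
    q a (swap i j b) * q i j * q a b ∈ pairClosure q S := by
  have hleft : ∀ j ∈ insert a S, q a (swap a j b) * q a j * q a b ∈ pairClosure q S := by
    intro j hj
    rcases eq_or_ne j a with rfl | hja
    · simp [hq.diag, hq.mul_self]
    rcases eq_or_ne b a with rfl | hba
    · simp [hq.diag, hq.mul_self]
    rcases eq_or_ne b j with rfl | hbj
    · simp [hq.diag, hq.mul_self]
    rw [swap_apply_of_ne_of_ne hba hbj, hq.mul_mul_of_ne hba.symm hja.symm hbj]
    exact mem_pairClosure q (Set.mem_of_mem_insert_of_ne hb hba)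
      (Set.mem_of_mem_insert_of_ne hj hja)
  rcases eq_or_ne i a with rfl | hia
  · exact hleft j hj
  rcases eq_or_ne j a with rfl | hja
  · rw [swap_comm, hq.symm i j]
    exact hleft i hi
  have hconj := (hq.semiconjBy_swap i j a b).eq
  rw [swap_apply_of_ne_of_ne hia.symm hja.symm] at hconj
  rw [mul_assoc, hconj, hq.mul_cancel_left]
  exact mem_pairClosure q (Set.mem_of_mem_insert_of_ne hi hia)
    (Set.mem_of_mem_insert_of_ne hj hja)

theorem mul_mem_pairClosure_of_mem_insert [DecidableEq ι] {φ : G →* Perm ι}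
    (hφ : ∀ i j, φ (q i j) = swap i j) {S : Set ι} {a : ι} {z : G}
    (hz : z ∈ pairClosure q (insert a S)) :
    φ z a ∈ insert a S ∧ q a (φ z a) * z ∈ pairClosure q S := by
  have hstep : ∀ i ∈ insert a S, ∀ j ∈ insert a S, ∀ y,
      φ y a ∈ insert a S ∧ q a (φ y a) * y ∈ pairClosure q S →
      φ (q i j * y) a ∈ insert a S ∧ q a (φ (q i j * y) a) * (q i j * y) ∈ pairClosure q S := by
    rintro i hi j hj y ⟨hya, hy⟩
    rw [map_mul, Perm.mul_apply, hφ]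
    refine ⟨?_, ?_⟩
    · rw [swap_apply_def]
      split_ifs <;> assumption
    · have := mul_mem (hq.schreierGenerator_mem_pairClosure hi hj hya) hy
      rwa [mul_assoc, hq.mul_cancel_left, mul_assoc] at this
  induction hz using Subgroup.closure_induction_left with
  | one => simp [hq.diag, one_mem]
  | mul_left x hx y _ ih =>
    obtain ⟨i, hi, j, hj, rfl⟩ := hx
    exact hstep i hi j hj y ih
  | inv_mul_cancel x hx y _ ih =>
    obtain ⟨i, hi, j, hj, rfl⟩ := hx
    rw [hq.inv_eq]
    exact hstep i hi j hj y ih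

theorem eq_one_of_mem_pairClosure [DecidableEq ι] {φ : G →* Perm ι}
    (hφ : ∀ i j, φ (q i j) = swap i j) {S : Set ι} (hS : S.Finite) {z : G}
    (hz : z ∈ pairClosure q S) (hz1 : φ z = 1) : z = 1 := by
  induction S, hS using Set.Finite.induction_on with
  | empty => simpa [pairClosure] using hz
  | insert _ _ ih =>
    have := (hq.mul_mem_pairClosure_of_mem_insert hφ hz).2
    rw [hz1, Perm.one_apply, hq.diag, one_mul] at this
    exact ih this

theorem exists_permHom [Finite ι] [DecidableEq ι] :
    ∃ ρ : Perm ι →* G, ∀ i j, ρ (swap i j) = q i j := by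
  let Q : ι → ι → Perm ι × G := fun i j => (swap i j, q i j)
  have hQ : IsTranspositionFamily Q := isTranspositionFamily_swap.prodMk hq
  have hmem : ∀ i j, Q i j ∈ pairClosure Q Set.univ := fun i j =>
    mem_pairClosure Q (Set.mem_univ i) (Set.mem_univ j)
  have hinj : Injective ((MonoidHom.fst _ _).comp (pairClosure Q Set.univ).subtype) :=
    (injective_iff_map_eq_one _).2 fun z hz => Subtype.ext <|
      hQ.eq_one_of_mem_pairClosure (φ := MonoidHom.fst _ _) (fun _ _ => rfl) Set.finite_univ z.2 hz
  have hsurj : Surjective ((MonoidHom.fst _ _).comp (pairClosure Q Set.univ).subtype) := by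
    intro σ
    induction σ using Perm.swap_induction_on with
    | one => exact ⟨1, map_one _⟩
    | swap_mul σ i j _ ih =>
      obtain ⟨z, rfl⟩ := ih
      exact ⟨⟨Q i j, hmem i j⟩ * z, map_mul _ _ _⟩
  obtain ⟨ρ, hρ⟩ := Subgroup.exists_eq_graph ⟨hinj, hsurj⟩
  exact ⟨ρ, fun i j => MonoidHom.mem_graph.1 (hρ ▸ hmem i j)⟩

end IsTranspositionFamily

end TranspositionFamily

section Axioms

variable {n : ℕ} {A B : Type*} [BooleanAlgebra A] [BooleanAlgebra B]

/-- The `FPA_n` axioms for a csp-algebra with cylindrifications `c`, substitutions `s` and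
transpositions `p`. -/
structure IsFPA (c : Fin n → A → A) (s p : Fin n → Fin n → A → A) : Prop where
  s_self : ∀ i x, s i i x = x
  p_self : ∀ i x, p i i x = x
  p_comm : ∀ i j x, p i j x = p j i x
  le_c : ∀ i x, x ≤ c i x
  c_sup : ∀ i x y, c i (x ⊔ y) = c i x ⊔ c i y
  s_c : ∀ i j x, s i j (c i x) = c i x
  c_s : ∀ i j x, i ≠ j → c i (s i j x) = s i j x
  s_c_of_ne : ∀ i j k x, k ≠ i → k ≠ j → s i j (c k x) = c k (s i j x)
  s_sup : ∀ i j x y, s i j (x ⊔ y) = s i j x ⊔ s i j y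
  s_compl : ∀ i j x, s i j xᶜ = (s i j x)ᶜ
  p_sup : ∀ i j x y, p i j (x ⊔ y) = p i j x ⊔ p i j y
  p_compl : ∀ i j x, p i j xᶜ = (p i j x)ᶜ
  p_p : ∀ i j x, p i j (p i j x) = x
  p_p_of_ne : ∀ i j k x, i ≠ j → i ≠ k → j ≠ k → p i j (p i k x) = p j k (p i j x)
  p_s : ∀ i j x, p i j (s j i x) = s i j x

/-- Embeddings of cs-algebras, that is, isomorphisms onto a subalgebra. -/
structure IsCsEmbedding (c : Fin n → A → A) (s : Fin n → Fin n → A → A) (c' : Fin n → B → B)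
    (s' : Fin n → Fin n → B → B) (f : A → B) : Prop where
  injective : Injective f
  map_sup : ∀ x y, f (x ⊔ y) = f x ⊔ f y
  map_compl : ∀ x, f xᶜ = (f x)ᶜ
  map_c : ∀ i x, f (c i x) = c' i (f x)
  map_s : ∀ i j x, f (s i j x) = s' i j (f x)

/-- Embeddings of csp-algebras, that is, isomorphisms onto a subalgebra. -/
structure IsCspEmbedding (c : Fin n → A → A) (s p : Fin n → Fin n → A → A) (c' : Fin n → B → B)
    (s' p' : Fin n → Fin n → B → B) (f : A → B) : Prop extends IsCsEmbedding c s c' s' f where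
  map_p : ∀ i j x, f (p i j x) = p' i j (f x)

variable {c : Fin n → A → A} {s p : Fin n → Fin n → A → A} {c' : Fin n → B → B}
  {s' p' : Fin n → Fin n → B → B} {f : A → B}

namespace IsCsEmbedding

variable (hf : IsCsEmbedding c s c' s' f)
include hf

theorem le_iff_le {x y : A} : f x ≤ f y ↔ x ≤ y := by
  rw [← sup_eq_right, ← hf.map_sup, hf.injective.eq_iff, sup_eq_right]

theorem map_inf (x y : A) : f (x ⊓ y) = f x ⊓ f y := by
  rw [← compl_compl (x ⊓ y), compl_inf, hf.map_compl, hf.map_sup, hf.map_compl, hf.map_compl,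
    ← compl_inf, compl_compl]

theorem map_symmDiff (x y : A) : f (symmDiff x y) = symmDiff (f x) (f y) := by
  simp only [symmDiff_eq, hf.map_sup, hf.map_inf, hf.map_compl]

end IsCsEmbedding

-- All axioms are equations, apart from `le_c`, which the embedding reflects as well.
theorem IsCspEmbedding.isFPA (hf : IsCspEmbedding c s p c' s' p' f) (h : IsFPA c' s' p') :
    IsFPA c s p where
  s_self i x := hf.injective <| by simp only [hf.map_s, h.s_self]
  p_self i x := hf.injective <| by simp only [hf.map_p, h.p_self]
  p_comm i j x := hf.injective <| by simp only [hf.map_p, h.p_comm i j]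
  le_c i x := hf.le_iff_le.1 <| by simp only [hf.map_c, h.le_c]
  c_sup i x y := hf.injective <| by simp only [hf.map_c, hf.map_sup, h.c_sup]
  s_c i j x := hf.injective <| by simp only [hf.map_s, hf.map_c, h.s_c]
  c_s i j x hij := hf.injective <| by simp only [hf.map_s, hf.map_c, h.c_s i j _ hij]
  s_c_of_ne i j k x hki hkj := hf.injective <| by
    simp only [hf.map_s, hf.map_c, h.s_c_of_ne i j k _ hki hkj]
  s_sup i j x y := hf.injective <| by simp only [hf.map_s, hf.map_sup, h.s_sup]
  s_compl i j x := hf.injective <| by simp only [hf.map_s, hf.map_compl, h.s_compl]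
  p_sup i j x y := hf.injective <| by simp only [hf.map_p, hf.map_sup, h.p_sup]
  p_compl i j x := hf.injective <| by simp only [hf.map_p, hf.map_compl, h.p_compl]
  p_p i j x := hf.injective <| by simp only [hf.map_p, h.p_p]
  p_p_of_ne i j k x hij hik hjk := hf.injective <| by
    simp only [hf.map_p, h.p_p_of_ne i j k _ hij hik hjk]
  p_s i j x := hf.injective <| by simp only [hf.map_p, hf.map_s, h.p_s]

namespace IsFPA

variable (h : IsFPA c s p)
include h

theorem p_le_p_iff (i j : Fin n) {x y : A} : p i j x ≤ p i j y ↔ x ≤ y := by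
  have hp : Injective (p i j) := Involutive.injective (h.p_p i j)
  rw [← sup_eq_right, ← h.p_sup, hp.eq_iff, sup_eq_right]

/-- The transposition operation `p i j` as an automorphism of the Boolean algebra. -/
def pIso (i j : Fin n) : A ≃o A where
  toEquiv := Involutive.toPerm (p i j) (h.p_p i j)
  map_rel_iff' := h.p_le_p_iff i j

theorem pIso_apply (i j : Fin n) (x : A) : h.pIso i j x = p i j x :=
  rfl

theorem isTranspositionFamily_pIso : IsTranspositionFamily h.pIso where
  diag i := RelIso.ext (h.p_self i)
  symm i j := RelIso.ext (h.p_comm i j)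
  mul_self i j := RelIso.ext (h.p_p i j)
  semiconjBy_of_ne i j k hij hik hjk := RelIso.ext fun x => h.p_p_of_ne i j k x hij hik hjk

theorem s_eq_self_of_c_eq_self {i : Fin n} {z : A} (hz : c i z = z) (j : Fin n) :
    s i j z = z := by
  rw [← hz, h.s_c]

theorem p_eq_s_of_c_eq_self {i : Fin n} {z : A} (hz : c i z = z) (j : Fin n) :
    p i j z = s j i z := by
  rw [← h.p_s j i, h.p_comm, h.s_eq_self_of_c_eq_self hz]

end IsFPA

end Axioms

section SetAlgebra

variable {n : ℕ} {U : Type}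

theorem mem_cyl {i : Fin n} {R : Set (Fin n → U)} {w : Fin n → U} :
    w ∈ cyl i R ↔ ∃ u, update w i u ∈ R :=
  Iff.rfl

theorem mem_subst {i j : Fin n} {R : Set (Fin n → U)} {w : Fin n → U} :
    w ∈ subst i j R ↔ update w i (w j) ∈ R :=
  Iff.rfl

theorem mem_transp {i j : Fin n} {R : Set (Fin n → U)} {w : Fin n → U} :
    w ∈ transp i j R ↔ w ∘ swap i j ∈ R := by
  rw [swap_comm, comp_swap_eq_update]
  rfl

theorem update_eq_update_of_forall_ne {ι α : Type*} [DecidableEq ι] {i : ι} {w w' : ι → α}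
    (h : ∀ k, k ≠ i → w k = w' k) (u : α) : update w i u = update w' i u := by
  funext k
  rcases eq_or_ne k i with rfl | hk
  · simp only [update_self]
  · simp only [update_of_ne hk, h k hk]

theorem mem_cyl_congr {i : Fin n} {R : Set (Fin n → U)} {w w' : Fin n → U}
    (h : ∀ k, k ≠ i → w k = w' k) : w ∈ cyl i R ↔ w' ∈ cyl i R := by
  simp only [mem_cyl, update_eq_update_of_forall_ne h]

theorem cyl_cyl (i : Fin n) (R : Set (Fin n → U)) : cyl i (cyl i R) = cyl i R := by
  ext w
  have : Nonempty U := ⟨w i⟩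
  simp only [mem_cyl, update_idem, exists_const]

theorem update_comp_swap_eq_update {ι α : Type*} [DecidableEq ι] (w : ι → α) (i j : ι) :
    update (w ∘ swap i j) j ((w ∘ swap i j) i) = update w i (w j) := by
  refine update_eq_iff.2 ⟨?_, fun k hk => ?_⟩
  · rcases eq_or_ne j i with rfl | hji
    · simp only [swap_self, coe_refl, comp_id, update_self]
    · simp only [comp_apply, swap_apply_left, update_of_ne hji]
  · rcases eq_or_ne k i with rfl | hki
    · simp only [comp_apply, swap_apply_left, update_self]
    · simp only [comp_apply, swap_apply_of_ne_of_ne hki hk, update_of_ne hki]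

theorem isFPA_set : IsFPA (cyl : Fin n → Set (Fin n → U) → _) subst transp where
  s_self i R := by ext w; simp only [mem_subst, update_eq_self]
  p_self i R := by ext w; simp only [mem_transp, swap_self, coe_refl, comp_id]
  p_comm i j R := by ext w; simp only [mem_transp, swap_comm i j]
  le_c i R w hw := ⟨w i, by rwa [update_eq_self]⟩
  c_sup i R R' := by ext w; simp only [mem_cyl, Set.sup_eq_union, Set.mem_union, exists_or]
  s_c i j R := by
    ext w
    exact mem_cyl_congr fun k hk => update_of_ne hk _ _
  c_s i j R hij := by
    ext w
    have : Nonempty U := ⟨w i⟩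
    simp only [mem_cyl, mem_subst, update_of_ne hij.symm, update_idem, exists_const]
  s_c_of_ne i j k R hki hkj := by
    ext w
    simp only [mem_cyl, mem_subst, update_of_ne hkj.symm, update_comm hki]
  s_sup _ _ _ _ := rfl
  s_compl _ _ _ := rfl
  p_sup _ _ _ _ := rfl
  p_compl _ _ _ := rfl
  p_p i j R := by
    ext w
    simp only [mem_transp, comp_assoc, ← Perm.coe_mul, swap_mul_self, Perm.coe_one, comp_id]
  p_p_of_ne i j k R hij hik hjk := by
    ext w
    have hswap := isTranspositionFamily_swap.semiconjBy_of_ne i j k hij hik hjk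
    simp only [mem_transp, comp_assoc, ← Perm.coe_mul, hswap.eq]
  p_s i j R := by
    ext w
    rw [mem_transp, mem_subst, mem_subst, update_comp_swap_eq_update]

end SetAlgebra

section Cylinders

variable {n : ℕ} {A : Type*} [BooleanAlgebra A] {U : Type} {c : Fin n → A → A}
  {s p : Fin n → Fin n → A → A} {f : A → Set (Fin n → U)}

theorem IsCsEmbedding.c_c (hf : IsCsEmbedding c s cyl subst f) (m : Fin n) (x : A) :
    c m (c m x) = c m x :=
  hf.injective <| by simp only [hf.map_c, cyl_cyl]

theorem IsCsEmbedding.mem_congr (hf : IsCsEmbedding c s cyl subst f) {m : Fin n} {z : A}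
    (hz : c m z = z) {w w' : Fin n → U} (h : ∀ k, k ≠ m → w k = w' k) : w ∈ f z ↔ w' ∈ f z := by
  rw [← hz, hf.map_c]
  exact mem_cyl_congr h

/-- The automorphism `e` acts on the elements cylindrical in direction `m` as the reindexing of
tuples by `σ` does in the set algebra: it maps them to elements cylindrical in direction `σ m`, and
`f` represents the images accordingly. -/
def ReindexesCylinders (c : Fin n → A → A) (f : A → Set (Fin n → U)) (m : Fin n) (e : A ≃o A)
    (σ : Perm (Fin n)) : Prop :=
  ∀ z, c m z = z → c (σ m) (e z) = e z ∧ ∀ w, w ∈ f (e z) ↔ w ∘ σ ∈ f z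

theorem reindexesCylinders_one (c : Fin n → A → A) (f : A → Set (Fin n → U)) (m : Fin n) :
    ReindexesCylinders c f m 1 1 :=
  fun _ hz => ⟨hz, fun _ => Iff.rfl⟩

theorem ReindexesCylinders.mul {m : Fin n} {e e' : A ≃o A} {σ σ' : Perm (Fin n)}
    (h : ReindexesCylinders c f (σ' m) e σ) (h' : ReindexesCylinders c f m e' σ') :
    ReindexesCylinders c f m (e * e') (σ * σ') := fun z hz =>
  have ⟨hz', hmem'⟩ := h' z hz
  have ⟨hz'', hmem⟩ := h (e' z) hz'
  ⟨hz'', fun w => (hmem w).trans (hmem' (w ∘ σ))⟩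

theorem IsFPA.reindexesCylinders_pIso_left (h : IsFPA c s p)
    (hf : IsCsEmbedding c s cyl subst f) (i j : Fin n) :
    ReindexesCylinders c f i (h.pIso i j) (swap i j) := by
  intro z hz
  rw [h.pIso_apply, h.p_eq_s_of_c_eq_self hz, swap_apply_left]
  rcases eq_or_ne j i with rfl | hji
  · simp [h.s_self, hz]
  refine ⟨h.c_s j i z hji, fun w => ?_⟩
  rw [hf.map_s, mem_subst, comp_swap_eq_update]
  exact hf.mem_congr hz fun k hk => (update_of_ne hk _ _).symm

theorem IsFPA.reindexesCylinders_pIso (h : IsFPA c s p) (hf : IsCsEmbedding c s cyl subst f)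
    (i j m : Fin n) : ReindexesCylinders c f m (h.pIso i j) (swap i j) := by
  have hq := h.isTranspositionFamily_pIso
  have hleft := h.reindexesCylinders_pIso_left hf
  rcases eq_or_ne i m with rfl | him
  · exact hleft i j
  rcases eq_or_ne j m with rfl | hjm
  · rw [hq.symm, swap_comm]
    exact hleft j i
  rcases eq_or_ne i j with rfl | hij
  · rw [hq.diag, swap_self]
    exact reindexesCylinders_one c f m
  -- Each factor involves the direction in which its argument is cylindrical: `m`, then `i`, `j`.
  rw [hq.eq_mul_mul_of_ne hij him hjm, isTranspositionFamily_swap.eq_mul_mul_of_ne hij him hjm,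
    mul_assoc, mul_assoc]
  have hmi : ReindexesCylinders c f m (h.pIso i m) (swap i m) := by
    rw [hq.symm, swap_comm]
    exact hleft m i
  refine ReindexesCylinders.mul ?_ (ReindexesCylinders.mul ?_ hmi)
  · simpa using hleft j m
  · simpa using hleft i j

theorem IsFPA.reindexesCylinders_permHom (h : IsFPA c s p) (hf : IsCsEmbedding c s cyl subst f)
    {ρ : Perm (Fin n) →* (A ≃o A)} (hρ : ∀ i j, ρ (swap i j) = h.pIso i j) (σ : Perm (Fin n))
    (m : Fin n) : ReindexesCylinders c f m (ρ σ) σ := by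
  induction σ using Perm.swap_induction_on with
  | one =>
    rw [map_one]
    exact reindexesCylinders_one c f m
  | swap_mul σ i j _ ih =>
    rw [map_mul, hρ]
    exact (h.reindexesCylinders_pIso hf i j (σ m)).mul ih

-- If `w (σ k) = w (σ l)`, then `w ∘ σ` does not separate `x` from the cylinder `s k l x`. Nor does
-- it after a change at a third index `m`, so it avoids the cylinder `c m (x ∆ s k l x)`.
theorem mem_apply_iff_of_not_injective (hn : 3 ≤ n) (h : IsFPA c s p)
    (hf : IsCsEmbedding c s cyl subst f) {e : A ≃o A} {σ : Perm (Fin n)}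
    (he : ∀ m, ReindexesCylinders c f m e σ) {w : Fin n → U} (hw : ¬ Injective w) (x : A) :
    w ∈ f (e x) ↔ w ∘ σ ∈ f x := by
  obtain ⟨k, l, hkl, hne⟩ : ∃ k l, (w ∘ σ) k = (w ∘ σ) l ∧ k ≠ l := by
    rw [← Injective.of_comp_iff' w σ.bijective] at hw
    simpa only [Injective, not_forall, exists_prop] using hw
  obtain ⟨m, hmk, hml⟩ := Fin.exists_ne_and_ne_of_two_lt k l hn
  have hdiag : ∀ t : Fin n → U, t k = t l → (t ∈ f (s k l x) ↔ t ∈ f x) := fun t ht => by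
    rw [hf.map_s, mem_subst, ← ht, update_eq_self]
  have hcyl : w ∘ σ ∉ f (c m (symmDiff x (s k l x))) := by
    rw [hf.map_c, mem_cyl]
    rintro ⟨u, hu⟩
    rw [hf.map_symmDiff, Set.mem_symmDiff, hdiag _ (by
      rwa [update_of_ne hmk.symm, update_of_ne hml.symm])] at hu
    tauto
  have hsymmDiff : w ∉ f (e (symmDiff x (s k l x))) := fun hmem =>
    hcyl <| ((he m _ (hf.c_c m _)).2 w).1 <|
      hf.le_iff_le.2 (e.monotone (h.le_c m (symmDiff x (s k l x)))) hmem
  rw [map_symmDiff', hf.map_symmDiff, Set.mem_symmDiff] at hsymmDiff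
  calc w ∈ f (e x) ↔ w ∈ f (e (s k l x)) := by tauto
    _ ↔ w ∘ σ ∈ f (s k l x) := (he k _ (h.c_s k l x hne)).2 w
    _ ↔ w ∘ σ ∈ f x := hdiag _ hkl

end Cylinders

section TwistedCover

variable {n : ℕ} {U V : Type}

/-- A base `V` lying over `U`, in which every tuple `t` carries a permutation `twist t`, compatible
with reindexing on injective tuples. Every element of `U` can be lifted into every coordinate of
every tuple so as to make the twist trivial. The tuples with trivial twist are those which get the
type of their label in the new representation; the types of all others are obtained from
reindexing. -/
structure TwistedCover (n : ℕ) (U V : Type) where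
  label : V → U
  label_surjective : Surjective label
  twist : (Fin n → V) → Perm (Fin n)
  twist_comp : ∀ (t : Fin n → V) (π : Perm (Fin n)), Injective t → twist (t ∘ π) = π⁻¹ * twist t
  exists_twist_update_eq_one : ∀ (t : Fin n → V) (i : Fin n) (u : U),
    ∃ v, label v = u ∧ twist (update t i v) = 1

theorem sort_comp_perm {α : Type*} [LinearOrder α] {t : Fin n → α} (ht : Injective t)
    (π : Perm (Fin n)) : Tuple.sort (t ∘ π) = π⁻¹ * Tuple.sort t := by
  rw [eq_inv_mul_iff_mul_eq]
  refine Equiv.ext fun k => ht ?_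
  exact congrFun Tuple.comp_perm_comp_sort_eq_comp_sort k

theorem sort_congr {α β : Type*} [LinearOrder α] [LinearOrder β] {t : Fin n → α} {t' : Fin n → β}
    (h : ∀ k l, t k ≤ t l ↔ t' k ≤ t' l) : Tuple.sort t = Tuple.sort t' := by
  have heq : ∀ k l, t k = t l ↔ t' k = t' l := fun k l => by
    rw [le_antisymm_iff, le_antisymm_iff, h, h]
  obtain ⟨hmono, hstable⟩ := Tuple.eq_sort_iff.1 (rfl : Tuple.sort t = Tuple.sort t)
  exact Tuple.eq_sort_iff.2 ⟨fun k l hkl => (h _ _).1 (hmono hkl),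
    fun k l hkl hkl' => hstable k l hkl ((heq _ _).2 hkl')⟩

theorem sort_update_eq_sort_update {α : Type*} [LinearOrder α] {t : Fin n → α} {v v' : α}
    (hv : ∀ k, t k < v) (hv' : ∀ k, t k < v') (i : Fin n) :
    Tuple.sort (update t i v) = Tuple.sort (update t i v') := by
  refine sort_congr fun k l => ?_
  rcases eq_or_ne i k with rfl | hk <;> rcases eq_or_ne i l with rfl | hl
  · simp only [le_refl]
  · simp only [update_self, update_of_ne hl.symm, (hv l).not_ge, (hv' l).not_ge]
  · simp only [update_self, update_of_ne hk.symm, (hv k).le, (hv' k).le]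
  · simp only [update_of_ne hk.symm, update_of_ne hl.symm]

theorem exists_forall_lt_toLex {ι α : Type*} [Finite ι] [LT α] (t : ι → ℕ ×ₗ α) :
    ∃ h : ℕ, ∀ k a, t k < toLex (h, a) := by
  obtain ⟨M, hM⟩ := (Set.finite_range fun k => (ofLex (t k)).1).bddAbove
  exact ⟨M + 1, fun k a => Prod.Lex.lt_iff.2 <| .inl <|
    Nat.lt_succ_of_le (hM (Set.mem_range_self k))⟩

theorem sup'_update_eq {ι α : Type*} [Fintype ι] [Nonempty ι] [DecidableEq ι] [SemilatticeSup α]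
    {t : ι → α} {v : α} (hv : ∀ k, t k ≤ v) (i : ι) :
    Finset.univ.sup' Finset.univ_nonempty (update t i v) = v := by
  refine le_antisymm (Finset.sup'_le _ _ fun k _ => ?_) ?_
  · rcases eq_or_ne k i with rfl | hk
    · rw [update_self]
    · rw [update_of_ne hk]
      exact hv k
  · exact Finset.le_sup'_of_le _ (Finset.mem_univ i) (update_self i v t).ge

theorem sup'_comp_perm {ι α : Type*} [Fintype ι] [Nonempty ι] [SemilatticeSup α] (t : ι → α)
    (π : Perm ι) :
    Finset.univ.sup' Finset.univ_nonempty (t ∘ π) = Finset.univ.sup' Finset.univ_nonempty t := by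
  refine eq_of_forall_ge_iff fun v => ?_
  simpa using π.forall_congr_right (q := fun k => t k ≤ v)

/-- The elements of this base consist of a height, a label and a code. The twist of a tuple is
the permutation sorting it, multiplied by the code of its largest entry. Placing a new element
above all others makes the sorting permutation independent of its code, which can then be chosen
to cancel it. -/
def lexTwistedCover (n : ℕ) [NeZero n] (U : Type) [LinearOrder (U × Perm (Fin n))] :
    TwistedCover n U (ℕ ×ₗ (U × Perm (Fin n))) where
  label v := (ofLex v).2.1
  label_surjective u := ⟨toLex (0, u, 1), rfl⟩
  twist t := Tuple.sort t * (ofLex (Finset.univ.sup' Finset.univ_nonempty t)).2.2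
  twist_comp t π ht := by
    rw [sort_comp_perm ht, sup'_comp_perm, mul_assoc]
  exists_twist_update_eq_one t i u := by
    obtain ⟨h, hh⟩ := exists_forall_lt_toLex t
    let σ := Tuple.sort (update t i (toLex (h, u, 1)))
    refine ⟨toLex (h, u, σ⁻¹), rfl, ?_⟩
    rw [sort_update_eq_sort_update (hh · _) (hh · (u, 1)), sup'_update_eq fun k => (hh k _).le]
    exact mul_inv_cancel σ

end TwistedCover

section TwistedRepresentation

variable {n : ℕ} {A : Type*} [BooleanAlgebra A] {U V : Type}

/-- The representation of `A` over the base of a twisted cover `K`, obtained from a representation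
`f` of its cs-reduct over `U` and an action `ρ` of the permutations on `A`. A tuple `t`, reindexed
by its twist, gets the type of its label, and the action carries this type back to `t`. -/
def twistedMap (K : TwistedCover n U V) (ρ : Perm (Fin n) →* (A ≃o A)) (f : A → Set (Fin n → U)) :
    A → Set (Fin n → V) :=
  fun x => {t | K.label ∘ t ∘ K.twist t ∈ f (ρ (K.twist t)⁻¹ x)}

variable {K : TwistedCover n U V} {ρ : Perm (Fin n) →* (A ≃o A)} {c : Fin n → A → A}
  {s p : Fin n → Fin n → A → A} {f : A → Set (Fin n → U)}

theorem mem_twistedMap {x : A} {t : Fin n → V} :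
    t ∈ twistedMap K ρ f x ↔ K.label ∘ t ∘ K.twist t ∈ f (ρ (K.twist t)⁻¹ x) :=
  Iff.rfl

theorem mem_twistedMap_of_twist_eq_one {t : Fin n → V} (ht : K.twist t = 1) (x : A) :
    t ∈ twistedMap K ρ f x ↔ K.label ∘ t ∈ f x := by
  rw [mem_twistedMap, ht, inv_one, map_one]
  rfl

theorem twistedMap_sup (hf : IsCsEmbedding c s cyl subst f) (x y : A) :
    twistedMap K ρ f (x ⊔ y) = twistedMap K ρ f x ⊔ twistedMap K ρ f y := by
  ext t
  simp only [mem_twistedMap, map_sup, hf.map_sup, Set.sup_eq_union, Set.mem_union]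

theorem twistedMap_compl (hf : IsCsEmbedding c s cyl subst f) (x : A) :
    twistedMap K ρ f xᶜ = (twistedMap K ρ f x)ᶜ := by
  ext t
  simp only [mem_twistedMap, map_compl', hf.map_compl, Set.mem_compl_iff]

theorem twistedMap_injective [NeZero n] (hf : Injective f) : Injective (twistedMap K ρ f) := by
  intro x y hxy
  refine hf (Set.ext fun w => ?_)
  obtain ⟨t, ht : K.label ∘ t = w⟩ := K.label_surjective.comp_left w
  obtain ⟨v, hv, htwist⟩ := K.exists_twist_update_eq_one t 0 (K.label (t 0))
  have hlabel : K.label ∘ update t 0 v = K.label ∘ t := by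
    rw [comp_update, hv, ← comp_apply (f := K.label), update_eq_self]
  rw [← ht, ← hlabel, ← mem_twistedMap_of_twist_eq_one (ρ := ρ) htwist, hxy,
    mem_twistedMap_of_twist_eq_one htwist]

theorem mem_twistedMap_of_c_eq_self (hcyl : ∀ σ m, ReindexesCylinders c f m (ρ σ) σ) {m : Fin n}
    {z : A} (hz : c m z = z) (t : Fin n → V) : t ∈ twistedMap K ρ f z ↔ K.label ∘ t ∈ f z := by
  rw [mem_twistedMap, (hcyl _ m z hz).2]
  simp only [comp_assoc, ← Perm.coe_mul, mul_inv_cancel, Perm.coe_one, comp_id]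

section

variable (hn : 3 ≤ n) (h : IsFPA c s p) (hf : IsCsEmbedding c s cyl subst f)
  (hcyl : ∀ σ m, ReindexesCylinders c f m (ρ σ) σ)
include hn h hf hcyl

theorem mem_twistedMap_of_not_injective {t : Fin n → V} (ht : ¬ Injective t) (x : A) :
    t ∈ twistedMap K ρ f x ↔ K.label ∘ t ∈ f x := by
  have hlabel : ¬ Injective (K.label ∘ t ∘ K.twist t) := fun hinj =>
    ht ((Injective.of_comp_iff' _ (K.twist t).bijective).1 hinj.of_comp)
  rw [mem_twistedMap, mem_apply_iff_of_not_injective hn h hf (hcyl _) hlabel]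
  simp only [comp_assoc, ← Perm.coe_mul, mul_inv_cancel, Perm.coe_one, comp_id]

theorem comp_perm_mem_twistedMap (t : Fin n → V) (π : Perm (Fin n)) (x : A) :
    t ∘ π ∈ twistedMap K ρ f x ↔ t ∈ twistedMap K ρ f (ρ π x) := by
  by_cases ht : Injective t
  · rw [mem_twistedMap, mem_twistedMap, K.twist_comp t π ht, ← RelIso.mul_apply, ← map_mul,
      mul_inv_rev, inv_inv, comp_assoc, ← Perm.coe_mul, mul_inv_cancel_left]
  · have htπ : ¬ Injective (t ∘ π) := by rwa [Injective.of_comp_iff' t π.bijective]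
    have hlabel : ¬ Injective (K.label ∘ t) := fun hinj => ht hinj.of_comp
    rw [mem_twistedMap_of_not_injective hn h hf hcyl htπ,
      mem_twistedMap_of_not_injective hn h hf hcyl ht,
      mem_apply_iff_of_not_injective hn h hf (hcyl π) hlabel, comp_assoc]

theorem twistedMap_s (i j : Fin n) (x : A) :
    twistedMap K ρ f (s i j x) = subst i j (twistedMap K ρ f x) := by
  ext t
  rcases eq_or_ne i j with rfl | hij
  · rw [h.s_self, isFPA_set.s_self]
  have hdiag : ¬ Injective (update t i (t j)) := fun hinj =>
    hij (hinj (by rw [update_self, update_of_ne hij.symm]))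
  rw [mem_twistedMap_of_c_eq_self hcyl (h.c_s i j x hij), hf.map_s, mem_subst, mem_subst,
    mem_twistedMap_of_not_injective hn h hf hcyl hdiag, comp_update, comp_apply]

end

theorem twistedMap_c (h : IsFPA c s p) (hf : IsCsEmbedding c s cyl subst f)
    (hcyl : ∀ σ m, ReindexesCylinders c f m (ρ σ) σ) (i : Fin n) (x : A) :
    twistedMap K ρ f (c i x) = cyl i (twistedMap K ρ f x) := by
  ext t
  rw [mem_twistedMap_of_c_eq_self hcyl (hf.c_c i x), mem_cyl]
  constructor
  · rw [hf.map_c, mem_cyl]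
    rintro ⟨u, hu⟩
    obtain ⟨v, rfl, htwist⟩ := K.exists_twist_update_eq_one t i u
    exact ⟨v, (mem_twistedMap_of_twist_eq_one htwist x).2 (by rwa [comp_update])⟩
  · rintro ⟨v, hv⟩
    have hmem : update t i v ∈ twistedMap K ρ f (c i x) :=
      hf.le_iff_le.2 ((ρ _).monotone (h.le_c i x)) hv
    rw [mem_twistedMap_of_c_eq_self hcyl (hf.c_c i x), comp_update] at hmem
    exact (hf.mem_congr (hf.c_c i x) fun k hk => update_of_ne hk _ _).1 hmem

theorem IsFPA.isCspEmbedding_twistedMap (hn : 3 ≤ n) (h : IsFPA c s p)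
    (hf : IsCsEmbedding c s cyl subst f) (hρ : ∀ i j, ρ (swap i j) = h.pIso i j) :
    IsCspEmbedding c s p cyl subst transp (twistedMap K ρ f) :=
  have : NeZero n := ⟨by lia⟩
  have hcyl := h.reindexesCylinders_permHom hf hρ
  { injective := twistedMap_injective hf.injective
    map_sup := twistedMap_sup hf
    map_compl := twistedMap_compl hf
    map_c := twistedMap_c h hf hcyl
    map_s := twistedMap_s hn h hf hcyl
    map_p := fun i j x => by
      ext t
      rw [mem_transp, comp_perm_mem_twistedMap hn h hf hcyl, hρ, h.pIso_apply] }

theorem IsFPA.exists_isCspEmbedding (hn : 3 ≤ n) (h : IsFPA c s p)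
    (hf : IsCsEmbedding c s cyl subst f) :
    ∃ (V : Type) (g : A → Set (Fin n → V)), IsCspEmbedding c s p cyl subst transp g :=
  have : NeZero n := ⟨by lia⟩
  letI : LinearOrder (U × Perm (Fin n)) := IsWellOrder.linearOrder WellOrderingRel
  have ⟨ρ, hρ⟩ := h.isTranspositionFamily_pIso.exists_permHom
  ⟨_, _, h.isCspEmbedding_twistedMap (K := lexTwistedCover n U) hn hf hρ⟩

end TwistedRepresentation

/-- Theorem: a csp-algebra embeds into a full csp-set algebra iff it satisfies the
`FPA_n` axioms and its cs-reduct embeds into a full cs-set algebra. -/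
theorem stmt6 {n : ℕ} (hn : 3 ≤ n) {A : Type} [BooleanAlgebra A]
    (c : Fin n → A → A) (s : Fin n → Fin n → A → A) (p : Fin n → Fin n → A → A) :
    RepCspSet c s p ↔
      ((∀ (i : Fin n) (x : A), s i i x = x) ∧
       (∀ (i : Fin n) (x : A), p i i x = x) ∧
       (∀ (i j : Fin n) (x : A), p i j x = p j i x) ∧
       (∀ (i : Fin n) (x : A), x ≤ c i x) ∧
       (∀ (i : Fin n) (x y : A), c i (x ⊔ y) = c i x ⊔ c i y) ∧
       (∀ (i j : Fin n) (x : A), s i j (c i x) = c i x) ∧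
       (∀ (i j : Fin n) (x : A), i ≠ j → c i (s i j x) = s i j x) ∧
       (∀ (i j k : Fin n) (x : A), k ≠ i → k ≠ j → s i j (c k x) = c k (s i j x)) ∧
       (∀ (i j : Fin n) (x y : A), s i j (x ⊔ y) = s i j x ⊔ s i j y) ∧
       (∀ (i j : Fin n) (x : A), s i j xᶜ = (s i j x)ᶜ) ∧
       (∀ (i j : Fin n) (x y : A), p i j (x ⊔ y) = p i j x ⊔ p i j y) ∧
       (∀ (i j : Fin n) (x : A), p i j xᶜ = (p i j x)ᶜ) ∧
       (∀ (i j : Fin n) (x : A), p i j (p i j x) = x) ∧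
       (∀ (i j k : Fin n) (x : A), i ≠ j → i ≠ k → j ≠ k →
          p i j (p i k x) = p j k (p i j x)) ∧
       (∀ (i j : Fin n) (x : A), p i j (s j i x) = s i j x) ∧
       RepCsSet c s) := by
  constructor
  · rintro ⟨V, f, hinj, hsup, hcompl, hc, hs, hp⟩
    have h : IsFPA c s p := IsCspEmbedding.isFPA ⟨⟨hinj, hsup, hcompl, hc, hs⟩, hp⟩ isFPA_set
    exact ⟨h.s_self, h.p_self, h.p_comm, h.le_c, h.c_sup, h.s_c, h.c_s, h.s_c_of_ne, h.s_sup,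
      h.s_compl, h.p_sup, h.p_compl, h.p_p, h.p_p_of_ne, h.p_s, V, f, hinj, hsup, hcompl, hc, hs⟩
  · rintro ⟨s_self, p_self, p_comm, le_c, c_sup, s_c, c_s, s_c_of_ne, s_sup, s_compl, p_sup,
      p_compl, p_p, p_p_of_ne, p_s, U, f, hinj, hsup, hcompl, hc, hs⟩
    have h : IsFPA c s p := ⟨s_self, p_self, p_comm, le_c, c_sup, s_c, c_s, s_c_of_ne, s_sup,
      s_compl, p_sup, p_compl, p_p, p_p_of_ne, p_s⟩
    obtain ⟨V, g, hg⟩ := h.exists_isCspEmbedding hn ⟨hinj, hsup, hcompl, hc, hs⟩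
    exact ⟨V, g, hg.injective, hg.map_sup, hg.map_compl, hg.map_c, hg.map_s, hg.map_p⟩
end

section
/- Let n ≥ 3 be a finite natural number and let 𝔄 be a csp-algebra of dimension n satisfying the FPA_n axioms. Then for all pairwise distinct i, j, k < n and all x ∈ A: s_ij s_kj x = s_ij s_ki x. -/
/-!
Let `f = s_ij ∘ s_kj`. Since `s_kj ∘ s_ki = s_ki`, the claim says that `f` absorbs `s_ki`, that is,
`f ∘ s_ki = f`. A homomorphism absorbs an idempotent endomorphism as soon as it kills its kernel,
and the kernel of `s_ij` is closed under `c_k` since `k ≠ i, j`. So a homomorphism absorbing `s_ij`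
is determined by its values on the ranges of `c_i` and `c_k`. Comparing values there shows that
`f` absorbs first `p_ij` and `p_kj`, hence their conjugate `p_ik`, and then `s_ki`.
-/

section BoundedLatticeHom

variable {A B : Type*} [BooleanAlgebra A]

/-- A map of Boolean algebras preserving joins and complements, as a lattice homomorphism. This is
how the Boolean endomorphisms of axiom (F6) are bundled. -/
def boundedLatticeHomOfSupCompl [BooleanAlgebra B] (f : A → B)
    (sup : ∀ x y, f (x ⊔ y) = f x ⊔ f y) (compl : ∀ x, f xᶜ = (f x)ᶜ) :
    BoundedLatticeHom A B where
  toFun := f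
  map_sup' := sup
  map_inf' x y := by
    rw [← compl_inj_iff, ← compl, compl_inf, compl_inf, sup, compl, compl]
  map_top' := by rw [← sup_compl_eq_top (x := ⊤), sup, compl, sup_compl_eq_top]
  map_bot' := by
    rw [← compl_top, compl, ← sup_compl_eq_top (x := ⊤), sup, compl, sup_compl_eq_top, compl_top]

theorem map_le_map_of_map_sdiff_eq_bot {F A B : Type*} [GeneralizedCoheytingAlgebra A]
    [SemilatticeSup B] [OrderBot B] [FunLike F A B] [SupBotHomClass F A B] (f : F) {x y : A}
    (h : f (x \ y) = ⊥) : f x ≤ f y :=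
  calc
    f x ≤ f (y ⊔ x \ y) := OrderHomClass.mono f le_sup_sdiff
    _ = f y := by rw [map_sup, h, sup_bot_eq]

theorem comp_eq_self_of_ker_le [Lattice B] [BoundedOrder B] {f : BoundedLatticeHom A B}
    {e : BoundedLatticeHom A A} (idem : ∀ x, e (e x) = e x)
    (ker : ∀ x, e x = ⊥ → f x = ⊥) : f.comp e = f := by
  refine BoundedLatticeHom.ext fun x => ?_
  have map_sdiff_left : e (e x \ x) = ⊥ := by rw [map_sdiff', idem, sdiff_self]
  have map_sdiff_right : e (x \ e x) = ⊥ := by rw [map_sdiff', idem, sdiff_self]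
  exact le_antisymm (map_le_map_of_map_sdiff_eq_bot f (ker _ map_sdiff_left))
    (map_le_map_of_map_sdiff_eq_bot f (ker _ map_sdiff_right))

end BoundedLatticeHom

/-- Algebras of cylindrifications `c`, substitutions `s` and transpositions `p` over a Boolean
algebra `A`, with an arbitrary type `ι` of coordinates, subject to `p_ij = p_ji` and the axioms
(F1), (F3)–(F6), (F8) and (F9). Axiom (F6) is encoded in the types of `s` and `p`. -/
structure WeakFPA (ι A : Type*) [BooleanAlgebra A] where
  c : ι → A → A
  s : ι → ι → BoundedLatticeHom A A
  p : ι → ι → BoundedLatticeHom A A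
  p_symm : ∀ i j x, p i j x = p j i x
  le_c : ∀ i x, x ≤ c i x
  s_c_self : ∀ i j x, s i j (c i x) = c i x
  c_s_self : ∀ i j x, i ≠ j → c i (s i j x) = s i j x
  s_c_comm : ∀ i j k x, k ≠ i → k ≠ j → s i j (c k x) = c k (s i j x)
  p_p_conj : ∀ i j k x, i ≠ j → i ≠ k → j ≠ k → p i j (p i k x) = p j k (p i j x)
  p_s_swap : ∀ i j x, p i j (s j i x) = s i j x

namespace WeakFPA

variable {ι A B : Type*} [BooleanAlgebra A] [Lattice B] [BoundedOrder B] (𝔄 : WeakFPA ι A)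
  {f g : BoundedLatticeHom A B} {i j k : ι}

theorem c_bot (hij : i ≠ j) : 𝔄.c i ⊥ = ⊥ := by
  rw [← map_bot (𝔄.s i j), 𝔄.c_s_self i j ⊥ hij]

theorem s_s_of_ne (hik : i ≠ k) (x : A) : 𝔄.s i j (𝔄.s i k x) = 𝔄.s i k x := by
  rw [← 𝔄.c_s_self i k x hik, 𝔄.s_c_self]

theorem s_s_swap (hij : i ≠ j) (x : A) : 𝔄.s i j (𝔄.s j i x) = 𝔄.s i j x := by
  rw [← 𝔄.p_s_swap i j (𝔄.s j i x), 𝔄.s_s_of_ne hij.symm, 𝔄.p_s_swap]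

theorem p_c_self (x : A) : 𝔄.p i j (𝔄.c i x) = 𝔄.s j i (𝔄.c i x) := by
  rw [← 𝔄.p_s_swap j i, 𝔄.p_symm, 𝔄.s_c_self]

theorem comp_s_eq_self_swap (hij : i ≠ j) (hf : f.comp (𝔄.s i j) = f) :
    f.comp (𝔄.s j i) = f := by
  rw [BoundedLatticeHom.ext_iff] at hf ⊢
  intro x
  calc
    f (𝔄.s j i x) = f (𝔄.s i j (𝔄.s j i x)) := (hf _).symm
    _ = f (𝔄.s i j x) := by rw [𝔄.s_s_swap hij]
    _ = f x := hf x

theorem comp_s_eq_self_of_apply_c_eq (hij : i ≠ j) (hki : k ≠ i) (hkj : k ≠ j)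
    (hf : f.comp (𝔄.s i j) = f) (hc : ∀ x, g (𝔄.c k x) = f (𝔄.c k x)) :
    g.comp (𝔄.s i j) = g := by
  refine comp_eq_self_of_ker_le (𝔄.s_s_of_ne hij) fun x hx => le_bot_iff.1 ?_
  calc
    g x ≤ g (𝔄.c k x) := OrderHomClass.mono g (𝔄.le_c k x)
    _ = f (𝔄.s i j (𝔄.c k x)) := (hc x).trans (DFunLike.congr_fun hf _).symm
    _ = ⊥ := by rw [𝔄.s_c_comm i j k x hki hkj, hx, 𝔄.c_bot hki, map_bot]

theorem eq_of_apply_c_eq (hij : i ≠ j) (hki : k ≠ i) (hkj : k ≠ j) (hf : f.comp (𝔄.s i j) = f)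
    (hci : ∀ x, g (𝔄.c i x) = f (𝔄.c i x)) (hck : ∀ x, g (𝔄.c k x) = f (𝔄.c k x)) :
    g = f := by
  have hg : g.comp (𝔄.s i j) = g := 𝔄.comp_s_eq_self_of_apply_c_eq hij hki hkj hf hck
  rw [← hg, ← hf]
  refine BoundedLatticeHom.ext fun x => ?_
  rw [BoundedLatticeHom.comp_apply, BoundedLatticeHom.comp_apply, ← 𝔄.c_s_self i j x hij, hci]

theorem comp_p_apply_c (hij : i ≠ j) (hf : f.comp (𝔄.s i j) = f) (x : A) :
    f.comp (𝔄.p i j) (𝔄.c i x) = f (𝔄.c i x) := by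
  rw [BoundedLatticeHom.comp_apply, 𝔄.p_c_self]
  exact DFunLike.congr_fun (𝔄.comp_s_eq_self_swap hij hf) _

theorem comp_p_eq_self (hij : i ≠ j) (hik : i ≠ k) (hjk : j ≠ k)
    (hfij : f.comp (𝔄.s i j) = f) (hfkj : f.comp (𝔄.s k j) = f) : f.comp (𝔄.p i j) = f := by
  refine 𝔄.eq_of_apply_c_eq hjk hij hik (𝔄.comp_s_eq_self_swap hjk.symm hfkj) (fun x => ?_)
    (𝔄.comp_p_apply_c hij hfij)
  rw [BoundedLatticeHom.comp_apply, 𝔄.p_symm]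
  exact 𝔄.comp_p_apply_c hij.symm (𝔄.comp_s_eq_self_swap hij hfij) x

theorem comp_p_eq_self_trans (hij : i ≠ j) (hik : i ≠ k) (hjk : j ≠ k)
    (hfij : f.comp (𝔄.p i j) = f) (hfkj : f.comp (𝔄.p k j) = f) : f.comp (𝔄.p i k) = f := by
  rw [BoundedLatticeHom.ext_iff] at hfij hfkj ⊢
  intro x
  calc
    f (𝔄.p i k x) = f (𝔄.p i j (𝔄.p i k x)) := (hfij _).symm
    _ = f (𝔄.p k j (𝔄.p i j x)) := by rw [𝔄.p_p_conj i j k x hij hik hjk, 𝔄.p_symm j k]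
    _ = f x := (hfkj _).trans (hfij x)

theorem comp_s_eq_self_trans (hij : i ≠ j) (hik : i ≠ k) (hjk : j ≠ k)
    (hfij : f.comp (𝔄.s i j) = f) (hfkj : f.comp (𝔄.s k j) = f) : f.comp (𝔄.s k i) = f := by
  have hpij : f.comp (𝔄.p i j) = f := 𝔄.comp_p_eq_self hij hik hjk hfij hfkj
  have hpkj : f.comp (𝔄.p k j) = f := 𝔄.comp_p_eq_self hjk.symm hik.symm hij.symm hfkj hfij
  have hpik : f.comp (𝔄.p i k) = f := 𝔄.comp_p_eq_self_trans hij hik hjk hpij hpkj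
  refine 𝔄.eq_of_apply_c_eq hij hik.symm hjk.symm hfij (fun x => ?_) (fun x => ?_)
  · rw [BoundedLatticeHom.comp_apply, ← 𝔄.p_c_self]
    exact DFunLike.congr_fun hpik _
  · rw [BoundedLatticeHom.comp_apply, 𝔄.s_c_self]

theorem s_comp_s_comp_s_eq_self (hij : i ≠ j) (hik : i ≠ k) (hjk : j ≠ k) :
    ((𝔄.s i j).comp (𝔄.s k j)).comp (𝔄.s i j) = (𝔄.s i j).comp (𝔄.s k j) :=
  𝔄.comp_s_eq_self_of_apply_c_eq hij hik.symm hjk.symm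
    (BoundedLatticeHom.ext (𝔄.s_s_of_ne hij)) fun x => by
      rw [BoundedLatticeHom.comp_apply, 𝔄.s_c_self]

end WeakFPA

theorem stmt11_general {ι A : Type*} [BooleanAlgebra A] (𝔄 : WeakFPA ι A) {i j k : ι}
    (hij : i ≠ j) (hik : i ≠ k) (hjk : j ≠ k) (x : A) :
    𝔄.s i j (𝔄.s k j x) = 𝔄.s i j (𝔄.s k i x) := by
  let f := (𝔄.s i j).comp (𝔄.s k j)
  have hfij : f.comp (𝔄.s i j) = f := 𝔄.s_comp_s_comp_s_eq_self hij hik hjk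
  have hfkj : f.comp (𝔄.s k j) = f :=
    BoundedLatticeHom.ext fun y => congrArg (𝔄.s i j) (𝔄.s_s_of_ne hjk.symm y)
  have hfki : f.comp (𝔄.s k i) = f := 𝔄.comp_s_eq_self_trans hij hik hjk hfij hfkj
  calc
    𝔄.s i j (𝔄.s k j x) = 𝔄.s i j (𝔄.s k j (𝔄.s k i x)) := (DFunLike.congr_fun hfki x).symm
    _ = 𝔄.s i j (𝔄.s k i x) := by rw [𝔄.s_s_of_ne hik.symm]

/-- Lemma (FS): in any `FPA_n` (`n ≥ 3`), for pairwise distinct `i, j, k`: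
`s_ij s_kj x = s_ij s_ki x`. -/
theorem stmt11 {n : ℕ} (hn : 3 ≤ n) {A : Type} [BooleanAlgebra A]
    (c : Fin n → A → A) (s : Fin n → Fin n → A → A) (p : Fin n → Fin n → A → A)
    (hsii : ∀ (i : Fin n) (x : A), s i i x = x)
    (hpii : ∀ (i : Fin n) (x : A), p i i x = x)
    (hpsymm : ∀ (i j : Fin n) (x : A), p i j x = p j i x)
    (hF1 : ∀ (i : Fin n) (x : A), x ≤ c i x)
    (hF2 : ∀ (i : Fin n) (x y : A), c i (x ⊔ y) = c i x ⊔ c i y)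
    (hF3 : ∀ (i j : Fin n) (x : A), s i j (c i x) = c i x)
    (hF4 : ∀ (i j : Fin n) (x : A), i ≠ j → c i (s i j x) = s i j x)
    (hF5 : ∀ (i j k : Fin n) (x : A), k ≠ i → k ≠ j → s i j (c k x) = c k (s i j x))
    (hF6ssup : ∀ (i j : Fin n) (x y : A), s i j (x ⊔ y) = s i j x ⊔ s i j y)
    (hF6scompl : ∀ (i j : Fin n) (x : A), s i j xᶜ = (s i j x)ᶜ)
    (hF6psup : ∀ (i j : Fin n) (x y : A), p i j (x ⊔ y) = p i j x ⊔ p i j y)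
    (hF6pcompl : ∀ (i j : Fin n) (x : A), p i j xᶜ = (p i j x)ᶜ)
    (hF7 : ∀ (i j : Fin n) (x : A), p i j (p i j x) = x)
    (hF8 : ∀ (i j k : Fin n) (x : A), i ≠ j → i ≠ k → j ≠ k →
      p i j (p i k x) = p j k (p i j x))
    (hF9 : ∀ (i j : Fin n) (x : A), p i j (s j i x) = s i j x) :
    ∀ i j k : Fin n, i ≠ j → i ≠ k → j ≠ k → ∀ x : A,
      s i j (s k j x) = s i j (s k i x) :=
  fun _ _ _ hij hik hjk => stmt11_general
    ⟨c, fun i j => boundedLatticeHomOfSupCompl (s i j) (hF6ssup i j) (hF6scompl i j),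
      fun i j => boundedLatticeHomOfSupCompl (p i j) (hF6psup i j) (hF6pcompl i j),
      hpsymm, hF1, hF3, hF4, hF5, hF8, hF9⟩ hij hik hjk
end
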